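/- Let X be a Hausdorff (T2) topological space and κ an infinite cardinal. Assume X is almost discretely Lindelöf, the tightness of X is at most κ, and the pseudocharacter of X is at most κ. Then every subset D ⊆ X that is discrete in the subspace topology has cardinality at most 2^κ. -/

import Mathlib

open Cardinal Set Filter Topology

/-- A topological space is *almost discretely Lindelöf* if every subset that is
discrete in the subspace topology is contained in a Lindelöf subspace. -/
def AlmostDiscretelyLindelof (X : Type*) [TopologicalSpace X] : Prop :=
  ∀ D : Set X, DiscreteTopology D → ∃ Y : Set X, D ⊆ Y ∧ IsLindelof Y

/-!
A discrete subset lies in a Lindelöf subspace, and tightness and pseudocharacter pass to subspaces,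
so it suffices to show that a Lindelöf Hausdorff space `X` with tightness and pseudocharacter at
most `κ` has at most `2 ^ κ` points (Shapirovskii).

By the Lindelöf and Hausdorff properties every point is the intersection of at most `κ` closed
neighbourhoods, and a point of `closure B` is determined by their traces on `B`, so
`#(closure B) ≤ 2 ^ κ` whenever `#B ≤ κ`. Fix at each point `x` a family `𝒰 x` of at most `κ` open
sets with intersection `{x}`. There is a set `H` of size at most `2 ^ κ` which contains, for every
`B ⊆ H` of size at most `κ`, the closure of `B` and a point outside `⋃₀ 𝒲` for every
`𝒲 ⊆ ⋃ x ∈ B, 𝒰 x` that does not cover `X`. By tightness `H` is closed, hence Lindelöf. If `y ∉ H`,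
then countably many members of the families `𝒰 x`, `x ∈ H`, cover `H` and miss `y`, so `H` contains
a point they do not cover, a contradiction.
-/

universe u

section ClosingOff

variable {α : Type u} {κ μ : Cardinal.{u}}

theorem two_power_power_self (hκ : ℵ₀ ≤ κ) : ((2 : Cardinal.{u}) ^ κ) ^ κ = 2 ^ κ := by
  rw [← power_mul, mul_eq_self hκ]

theorem mk_wType_le {ι : Type u} {β : ι → Type u} (hμ : ℵ₀ ≤ μ) (hι : #ι ≤ μ)
    (hβ : ∀ i, μ ^ #(β i) ≤ μ) : #(WType β) ≤ μ :=
  WType.cardinalMk_le_of_le <|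
    calc sum (fun i ↦ μ ^ #(β i)) ≤ #ι * ⨆ i, μ ^ #(β i) := sum_le_mk_mul_iSup _
      _ ≤ μ := mul_le_of_le hμ hι (ciSup_le' hβ)

theorem exists_subset_range_of_mk_le {ι : Type u} [Nonempty α] {s : Set α} (h : #s ≤ #ι) :
    ∃ f : ι → α, s ⊆ range f := by
  obtain ⟨e⟩ := h
  refine ⟨Function.extend e (↑) fun _ ↦ Classical.arbitrary α, fun x hx ↦ ⟨e ⟨x, hx⟩, ?_⟩⟩
  exact e.injective.extend_apply _ _ _

theorem exists_range_eq_of_mk_le {K : Type u} {s : Set α} (h : #s ≤ #K) :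
    ∃ (S : Set K) (f : S → α), range f = s := by
  obtain ⟨e⟩ := h
  refine ⟨range e, (↑) ∘ (Equiv.ofInjective e e.injective).symm, ?_⟩
  rw [EquivLike.range_comp, Subtype.range_coe]

theorem exists_mk_le_closed_under (hμ : ℵ₀ ≤ μ) (hμκ : μ ^ κ ≤ μ) (Φ : Set α → Set α)
    (hΦ : ∀ B : Set α, #B ≤ κ → #(Φ B) ≤ μ) :
    ∃ H : Set α, #H ≤ μ ∧ ∀ B ⊆ H, #B ≤ κ → Φ B ⊆ H := by
  cases isEmpty_or_nonempty α
  · exact ⟨∅, by simp, fun B _ _ x ↦ isEmptyElim x⟩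
  induction κ using Cardinal.inductionOn with | _ K
  induction μ using Cardinal.inductionOn with | _ M
  have enumerate (B : Set α) : ∃ e : M → α, #B ≤ #K → Φ B ⊆ range e := by
    by_cases hB : #B ≤ #K
    · exact (exists_subset_range_of_mk_le (hΦ B hB)).imp fun _ he _ ↦ he
    · exact ⟨fun _ ↦ Classical.arbitrary α, fun h ↦ absurd h hB⟩
  choose e he using enumerate
  -- `H` consists of the values of the well-founded trees whose nodes are labelled by `(S, m)`,
  -- have one child for each element of `S`, and evaluate to the `m`-th element of
  -- `Φ {values of the children}`.
  let value : WType (fun i : Set K × M ↦ i.1) → α := WType.elim α fun t ↦ e (range t.2) t.1.2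
  refine ⟨range value, mk_range_le.trans (mk_wType_le hμ ?_ fun i ↦ ?_), fun B hBH hB y hy ↦ ?_⟩
  · have two_power_le : 2 ^ #K ≤ #M :=
      (power_le_power_right (natCast_le_aleph0.trans hμ)).trans hμκ
    simpa using mul_le_of_le hμ two_power_le le_rfl
  · exact (power_le_power_left (aleph0_pos.trans_le hμ).ne' (mk_set_le i.1)).trans hμκ
  · obtain ⟨S, f, rfl⟩ := exists_range_eq_of_mk_le hB
    choose child hchild using fun s ↦ hBH (mem_range_self s)
    obtain ⟨m, rfl⟩ := he _ hB hy
    refine ⟨.mk (S, m) child, ?_⟩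
    rw [← funext hchild]
    rfl

end ClosingOff

/-- The tightness of `X` is at most `κ`. -/
def TightnessLE (X : Type u) [TopologicalSpace X] (κ : Cardinal.{u}) : Prop :=
  ∀ A : Set X, ∀ x ∈ closure A, ∃ B ⊆ A, #B ≤ κ ∧ x ∈ closure B

/-- The pseudocharacter of `X` is at most `κ`: every point is the intersection of at most `κ`
open sets. -/
def PseudocharacterLE (X : Type u) [TopologicalSpace X] (κ : Cardinal.{u}) : Prop :=
  ∀ x : X, ∃ 𝒰 : Set (Set X), #𝒰 ≤ κ ∧ (∀ U ∈ 𝒰, IsOpen U) ∧ ⋂₀ 𝒰 = {x}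

/-- The closed pseudocharacter `ψ_c` of `X` is at most `κ`. The usual definition asks for at most
`κ` open neighbourhoods of each point whose closures intersect in that point; here the closed
neighbourhoods themselves are used. -/
def ClosedPseudocharacterLE (X : Type u) [TopologicalSpace X] (κ : Cardinal.{u}) : Prop :=
  ∀ x : X, ∃ 𝒞 : Set (Set X), #𝒞 ≤ κ ∧ (∀ C ∈ 𝒞, C ∈ 𝓝 x ∧ IsClosed C) ∧ ⋂₀ 𝒞 = {x}

section CardinalFunctions

variable {X Y : Type u} [TopologicalSpace X] [TopologicalSpace Y] {κ : Cardinal.{u}}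

theorem TightnessLE.of_isInducing {f : Y → X} (hf : IsInducing f) (h : TightnessLE X κ) :
    TightnessLE Y κ := by
  intro A y hy
  rw [hf.closure_eq_preimage_closure_image] at hy
  obtain ⟨B, hBA, hB, hyB⟩ := h _ _ hy
  obtain ⟨A', hA', hbij⟩ := SurjOn.exists_bijOn_subset hBA
  refine ⟨A', hA', (mk_congr hbij.equiv).trans_le hB, ?_⟩
  rwa [hf.closure_eq_preimage_closure_image, hbij.image_eq]

theorem PseudocharacterLE.of_injective {f : Y → X} (hfc : Continuous f) (hf : f.Injective)
    (h : PseudocharacterLE X κ) : PseudocharacterLE Y κ := by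
  intro y
  obtain ⟨𝒰, h𝒰, h𝒰o, h𝒰y⟩ := h (f y)
  refine ⟨preimage f '' 𝒰, mk_image_le.trans h𝒰,
    forall_mem_image.2 fun U hU ↦ (h𝒰o U hU).preimage hfc, ?_⟩
  rw [sInter_image, ← preimage_sInter, h𝒰y, ← image_singleton, hf.preimage_image]

theorem exists_isClosed_nhds_notMem [T2Space X] {x y : X} (h : x ≠ y) :
    ∃ C ∈ 𝓝 x, IsClosed C ∧ y ∉ C := by
  obtain ⟨U, V, hU, hV, hxU, hyV, hUV⟩ := t2_separation h
  exact ⟨Vᶜ, mem_of_superset (hU.mem_nhds hxU) hUV.subset_compl_right, hV.isClosed_compl,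
    notMem_compl_iff.2 hyV⟩

theorem exists_countable_isClosed_nhds_disjoint [T2Space X] {K : Set X} (hK : IsLindelof K)
    {x : X} (hx : x ∉ K) :
    ∃ 𝒞 : Set (Set X), 𝒞.Countable ∧ (∀ C ∈ 𝒞, C ∈ 𝓝 x ∧ IsClosed C) ∧ Disjoint (⋂₀ 𝒞) K := by
  have separate (y : K) : ∃ C ∈ 𝓝 x, IsClosed C ∧ (y : X) ∉ C :=
    exists_isClosed_nhds_notMem (ne_of_mem_of_not_mem y.2 hx).symm
  choose C hCx hC hyC using separate
  obtain ⟨t, ht, hKt⟩ := hK.elim_countable_subcover (fun y ↦ (C y)ᶜ)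
    (fun y ↦ (hC y).isOpen_compl) fun y hy ↦ mem_iUnion.2 ⟨⟨y, hy⟩, hyC _⟩
  refine ⟨C '' t, ht.image C, forall_mem_image.2 fun y _ ↦ ⟨hCx y, hC y⟩, ?_⟩
  rwa [← subset_compl_iff_disjoint_left, sInter_image, compl_iInter₂]

theorem PseudocharacterLE.closedPseudocharacterLE [T2Space X] [LindelofSpace X] (hκ : ℵ₀ ≤ κ)
    (h : PseudocharacterLE X κ) : ClosedPseudocharacterLE X κ := by
  intro x
  obtain ⟨𝒰, h𝒰, h𝒰o, h𝒰x⟩ := h x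
  have hx (U : 𝒰) : x ∉ (U : Set X)ᶜ := notMem_compl_iff.2 <|
    mem_sInter.1 (h𝒰x.ge (mem_singleton x)) U U.2
  choose 𝒞 h𝒞 h𝒞x h𝒞U using fun U : 𝒰 ↦
    exists_countable_isClosed_nhds_disjoint (h𝒰o U U.2).isClosed_compl.isLindelof (hx U)
  have nhds_closed : ∀ C ∈ ⋃ U, 𝒞 U, C ∈ 𝓝 x ∧ IsClosed C := fun C hC ↦
    let ⟨U, hCU⟩ := mem_iUnion.1 hC
    h𝒞x U C hCU
  refine ⟨⋃ U, 𝒞 U, ?_, nhds_closed, Subset.antisymm ?_ ?_⟩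
  · exact (mk_iUnion_le _).trans <|
      mul_le_of_le hκ h𝒰 (ciSup_le' fun U ↦ (h𝒞 U).le_aleph0.trans hκ)
  · rw [← h𝒰x]
    exact subset_sInter fun U hU ↦ (sInter_subset_sInter (subset_iUnion 𝒞 ⟨U, hU⟩)).trans
      (disjoint_compl_right_iff_subset.1 (h𝒞U ⟨U, hU⟩))
  · exact singleton_subset_iff.2 fun C hC ↦ mem_of_mem_nhds (nhds_closed C hC).1

theorem biInter_closure_inter_eq_singleton {A : Set X} {x : X} (hx : x ∈ closure A)
    {𝒞 : Set (Set X)} (h𝒞 : ∀ C ∈ 𝒞, C ∈ 𝓝 x ∧ IsClosed C) (h𝒞x : ⋂₀ 𝒞 = {x}) :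
    ⋂ C ∈ 𝒞, closure (C ∩ A) = {x} := by
  refine Subset.antisymm ?_ (singleton_subset_iff.2 <| mem_iInter₂.2 fun C hC ↦ ?_)
  · rw [← h𝒞x, sInter_eq_biInter]
    exact iInter₂_mono fun C hC ↦ closure_minimal inter_subset_left (h𝒞 C hC).2
  · refine mem_closure_iff_nhds.2 fun t ht ↦ ?_
    rw [← inter_assoc]
    exact mem_closure_iff_nhds.1 hx _ (inter_mem ht (h𝒞 C hC).1)

theorem ClosedPseudocharacterLE.mk_closure_le (h : ClosedPseudocharacterLE X κ) (A : Set X) :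
    #(closure A) ≤ max (2 ^ #A) ℵ₀ ^ κ := by
  choose 𝒞 h𝒞 h𝒞x h𝒞s using h
  let traces (x : closure A) : {𝒯 : Set (Set X) // 𝒯 ⊆ 𝒫 A ∧ #𝒯 ≤ κ} :=
    ⟨(· ∩ A) '' 𝒞 x, image_subset_iff.2 fun _ _ ↦ inter_subset_right, mk_image_le.trans (h𝒞 x)⟩
  have biInter_traces (x : closure A) : ⋂ T ∈ (traces x).1, closure T = {(x : X)} := by
    rw [biInter_image]
    exact biInter_closure_inter_eq_singleton x.2 (h𝒞x x) (h𝒞s x)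
  have traces_injective : traces.Injective := fun x y hxy ↦
    Subtype.ext <| singleton_injective <| by rw [← biInter_traces x, hxy, biInter_traces y]
  calc #(closure A) ≤ #{𝒯 : Set (Set X) // 𝒯 ⊆ 𝒫 A ∧ #𝒯 ≤ κ} :=
        mk_le_of_injective traces_injective
    _ ≤ max #(𝒫 A) ℵ₀ ^ κ := mk_bounded_subset_le _ _
    _ = max (2 ^ #A) ℵ₀ ^ κ := by rw [mk_powerset]

theorem ClosedPseudocharacterLE.mk_closure_le_two_power (hκ : ℵ₀ ≤ κ)
    (h : ClosedPseudocharacterLE X κ) {A : Set X} (hA : #A ≤ κ) : #(closure A) ≤ 2 ^ κ :=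
  calc #(closure A) ≤ max (2 ^ #A) ℵ₀ ^ κ := h.mk_closure_le A
    _ ≤ (2 ^ κ) ^ κ := power_le_power_right <|
      max_le (power_le_power_left two_ne_zero hA) (hκ.trans (cantor κ).le)
    _ = 2 ^ κ := two_power_power_self hκ

theorem exists_countable_cover_notMem {𝒰 : X → Set (Set X)} (h𝒰o : ∀ x, ∀ U ∈ 𝒰 x, IsOpen U)
    (h𝒰 : ∀ x, ⋂₀ 𝒰 x = {x}) {H : Set X} (hH : IsLindelof H) {y : X} (hy : y ∉ H) :
    ∃ B ⊆ H, B.Countable ∧ ∃ 𝒲 ⊆ ⋃ x ∈ B, 𝒰 x, H ⊆ ⋃₀ 𝒲 ∧ y ∉ ⋃₀ 𝒲 := by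
  have exists_notMem (x : X) : ∃ U, x ∈ H → U ∈ 𝒰 x ∧ y ∉ U := by
    by_contra! hU
    have hyx : y ∈ ⋂₀ 𝒰 x := fun U hU𝒰 ↦ by_contra fun hyU ↦ hyU ((hU U).2 hU𝒰)
    rw [h𝒰, mem_singleton_iff] at hyx
    exact hy (hyx ▸ (hU ∅).1)
  choose U hU using exists_notMem
  have mem_nhds (x : X) (hx : x ∈ H) : U x ∈ 𝓝 x :=
    (h𝒰o x _ (hU x hx).1).mem_nhds <| mem_sInter.1 ((h𝒰 x).ge rfl) _ (hU x hx).1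
  obtain ⟨B, hB, hBH, hHB⟩ := hH.elim_nhds_subcover U mem_nhds
  refine ⟨B, hBH, hB, U '' B, ?_, by rwa [sUnion_image], ?_⟩
  · exact image_subset_iff.2 fun x hx ↦ mem_biUnion hx (hU x (hBH x hx)).1
  · rw [sUnion_image, mem_iUnion₂]
    rintro ⟨x, hx, hyx⟩
    exact (hU x (hBH x hx)).2 hyx

theorem mk_le_two_power_of_lindelofSpace [T2Space X] [LindelofSpace X] (hκ : ℵ₀ ≤ κ)
    (ht : TightnessLE X κ) (hψ : PseudocharacterLE X κ) : #X ≤ 2 ^ κ := by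
  cases isEmpty_or_nonempty X
  · simp
  have aleph0_le : ℵ₀ ≤ (2 : Cardinal.{u}) ^ κ := hκ.trans (cantor κ).le
  have mk_closure_le {B : Set X} (hB : #B ≤ κ) : #(closure B) ≤ 2 ^ κ :=
    (hψ.closedPseudocharacterLE hκ).mk_closure_le_two_power hκ hB
  choose 𝒰 h𝒰κ h𝒰o h𝒰 using hψ
  have mk_biUnion_𝒰_le {B : Set X} (hB : #B ≤ κ) : #(⋃ x ∈ B, 𝒰 x) ≤ κ :=
    (mk_biUnion_le _ _).trans <| mul_le_of_le hκ hB (ciSup_le' fun x ↦ h𝒰κ x)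
  let p (𝒲 : Set (Set X)) : X := Classical.epsilon (· ∉ ⋃₀ 𝒲)
  let Φ (B : Set X) : Set X := closure B ∪ p '' 𝒫 (⋃ x ∈ B, 𝒰 x)
  have mk_Φ_le (B : Set X) (hB : #B ≤ κ) : #(Φ B) ≤ 2 ^ κ := by
    refine (mk_union_le _ _).trans <|
      add_le_of_le aleph0_le (mk_closure_le hB) (mk_image_le.trans ?_)
    rw [mk_powerset]
    exact power_le_power_left two_ne_zero (mk_biUnion_𝒰_le hB)
  obtain ⟨H, hH, hΦH⟩ :=
    exists_mk_le_closed_under aleph0_le (two_power_power_self hκ).le Φ mk_Φ_le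
  have isClosed_H : IsClosed H := isClosed_of_closure_subset fun x hx ↦ by
    obtain ⟨B, hBH, hB, hxB⟩ := ht H x hx
    exact hΦH B hBH hB (.inl hxB)
  have H_eq_univ : H = Set.univ := by
    by_contra hne
    obtain ⟨y, hy⟩ := (ne_univ_iff_exists_notMem H).1 hne
    obtain ⟨B, hBH, hB, 𝒲, h𝒲B, hH𝒲, hy𝒲⟩ :=
      exists_countable_cover_notMem h𝒰o h𝒰 isClosed_H.isLindelof hy
    have p_mem : p 𝒲 ∈ H :=
      hΦH B hBH (hB.le_aleph0.trans hκ) (.inr (mem_image_of_mem p h𝒲B))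
    exact Classical.epsilon_spec (p := (· ∉ ⋃₀ 𝒲)) ⟨y, hy𝒲⟩ (hH𝒲 p_mem)
  rwa [H_eq_univ, mk_univ] at hH

end CardinalFunctions

theorem spread_le_of_almostDiscretelyLindelof
    {X : Type u} [TopologicalSpace X] [T2Space X] (κ : Cardinal.{u})
    (hκ : ℵ₀ ≤ κ)
    (hADL : AlmostDiscretelyLindelof X)
    (htight : ∀ A : Set X, ∀ x ∈ closure A, ∃ B ⊆ A, #B ≤ κ ∧ x ∈ closure B)
    (hψ : ∀ x : X, ∃ 𝒰 : Set (Set X), #𝒰 ≤ κ ∧ (∀ U ∈ 𝒰, IsOpen U) ∧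
      ⋂₀ 𝒰 = {x}) :
    ∀ D : Set X, DiscreteTopology D → #D ≤ 2 ^ κ := by
  intro D hD
  obtain ⟨Y, hDY, hY⟩ := hADL D hD
  have : LindelofSpace Y := isLindelof_iff_lindelofSpace.1 hY
  calc #D ≤ #Y := mk_le_mk_of_subset hDY
    _ ≤ 2 ^ κ := mk_le_two_power_of_lindelofSpace hκ
      (TightnessLE.of_isInducing .subtypeVal htight)
      (PseudocharacterLE.of_injective continuous_subtype_val Subtype.val_injective hψ)
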